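/- Let m ≥ 1, let R be a commutative ring in which (m−1)! is invertible, let J ∈ Mat_m(R) be an invertible matrix, and let A ∈ Mat_m(R) have characteristic polynomial X^m. Set B = exp(A), the truncated exponential. Then Aᵀ J + J A = 0 if and only if Bᵀ J B = J. -/

import Mathlib

open Polynomial

/-- The truncated exponential of a matrix: `exp(A) = ∑_{i=0}^{m-1} A^i / i!`. -/
noncomputable def truncExp {R : Type*} [CommRing R] {m : ℕ}
    (A : Matrix (Fin m) (Fin m) R) : Matrix (Fin m) (Fin m) R :=
  ∑ i ∈ Finset.range m, (Ring.inverse ((i.factorial : R))) • A ^ i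

/-!
Over any coefficient ring, a polynomial whose linear coefficient is a unit has a left inverse for
composition modulo every power of `X`. Such a polynomial `p` can therefore be undone on nilpotent
elements by another polynomial `q`, and since polynomials preserve the relation `a * b = c * a`,
`a` intertwines `b` and `c` as soon as it intertwines `p(b)` and `p(c)`.

Applied to the truncated exponential, this settles the theorem: `Aᵀ * J + J * A = 0` says that `J`
intertwines `-A` and `Aᵀ`, while `Bᵀ * J * B = J` says that it intertwines `exp(-A) = B⁻¹` and
`exp(Aᵀ) = Bᵀ`.
-/

theorem exists_X_pow_dvd_comp_sub_X {R : Type*} [CommRing R] {p : R[X]}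
    (hp : IsUnit (p.coeff 1)) (n : ℕ) : ∃ q : R[X], X ^ n ∣ q.comp p - X := by
  induction n with
  | zero => exact ⟨0, by simp⟩
  | succ n ih =>
    obtain ⟨q, g, hg⟩ := ih
    obtain ⟨v, hv⟩ := hp.exists_left_inv
    have hdivX : p - C (p.coeff 0) = X * p.divX :=
      sub_eq_of_eq_add (X_mul_divX_add p).symm
    -- `(p - p(0)) ^ n` starts with `u ^ n * X ^ n`, where `u = v⁻¹` is the linear coefficient of
    -- `p`, so a multiple of it cancels the coefficient of `X ^ n` in the error.
    refine ⟨q - C (g.coeff 0 * v ^ n) * (X - C (p.coeff 0)) ^ n, ?_⟩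
    have herror : (q - C (g.coeff 0 * v ^ n) * (X - C (p.coeff 0)) ^ n).comp p - X =
        X ^ n * (g - C (g.coeff 0 * v ^ n) * p.divX ^ n) := by
      simp only [sub_comp, mul_comp, pow_comp, X_comp, C_comp, hdivX]
      linear_combination hg
    have hcoeff : (g - C (g.coeff 0 * v ^ n) * p.divX ^ n).coeff 0 = 0 := by
      rw [coeff_sub, coeff_C_mul, coeff_zero_eq_eval_zero (p.divX ^ n), eval_pow,
        ← coeff_zero_eq_eval_zero, coeff_divX, mul_assoc, ← mul_pow, hv, one_pow, mul_one, sub_self]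
    rw [herror, pow_succ]
    exact mul_dvd_mul_left _ (X_dvd_iff.mpr hcoeff)

theorem semiconjBy_aeval {R S : Type*} [CommSemiring R] [Semiring S] [Algebra R S] {a b c : S}
    (h : SemiconjBy a b c) (p : R[X]) : SemiconjBy a (aeval b p) (aeval c p) := by
  induction p using Polynomial.induction_on' with
  | add p q hp hq => simpa only [map_add] using hp.add_right hq
  | monomial n r =>
    simpa only [aeval_monomial, ← Algebra.smul_def] using (h.pow_right n).smul_right r

theorem aeval_eq_zero_of_X_pow_dvd {R S : Type*} [CommSemiring R] [Semiring S] [Algebra R S]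
    {p : R[X]} {n : ℕ} {b : S} (hp : X ^ n ∣ p) (hb : b ^ n = 0) : aeval b p = 0 := by
  obtain ⟨q, rfl⟩ := hp
  rw [map_mul, map_pow, aeval_X, hb, zero_mul]

theorem semiconjBy_aeval_iff_of_isUnit_coeff_one {R S : Type*} [CommRing R] [Ring S] [Algebra R S]
    {p : R[X]} (hp : IsUnit (p.coeff 1)) {a b c : S} (hb : IsNilpotent b) (hc : IsNilpotent c) :
    SemiconjBy a (aeval b p) (aeval c p) ↔ SemiconjBy a b c := by
  refine ⟨fun h ↦ ?_, fun h ↦ semiconjBy_aeval h p⟩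
  obtain ⟨k, hk⟩ := hb
  obtain ⟨l, hl⟩ := hc
  obtain ⟨q, hq⟩ := exists_X_pow_dvd_comp_sub_X hp (max k l)
  have recover {x : S} (hx : x ^ max k l = 0) : aeval (aeval x p) q = x := by
    simpa only [map_sub, aeval_comp, aeval_X, sub_eq_zero] using aeval_eq_zero_of_X_pow_dvd hq hx
  have hqp := semiconjBy_aeval h q
  rwa [recover (pow_eq_zero_of_le (le_max_left k l) hk),
    recover (pow_eq_zero_of_le (le_max_right k l) hl)] at hqp

theorem inverse_factorial_mul_add_pow {A : Type*} [CommSemiring A] {d : ℕ}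
    (hd : IsUnit (d.factorial : A)) (x y : A) :
    Ring.inverse (d.factorial : A) * (x + y) ^ d =
      ∑ k ∈ Finset.HasAntidiagonal.antidiagonal d,
        Ring.inverse (k.1.factorial : A) * x ^ k.1 *
          (Ring.inverse (k.2.factorial : A) * y ^ k.2) := by
  classical
  simpa only [DividedPowers.OfInvertibleFactorial.dpow_eq_of_mem Submodule.mem_top] using
    DividedPowers.OfInvertibleFactorial.dpow_add_of_lt (I := (⊤ : Ideal A)) (n := d + 1) hd
      d.lt_succ_self (Submodule.mem_top (x := x)) (Submodule.mem_top (x := y))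

/-- The truncated exponential series `∑_{i < m} X ^ i / i!` as a polynomial. As in `truncExp`, the
inverse factorials are taken with `Ring.inverse`, so the `i`-th coefficient is `0` when `i!` is not
a unit. -/
noncomputable def truncExpPoly (R : Type*) [CommRing R] (m : ℕ) : R[X] :=
  ∑ i ∈ Finset.range m, C (Ring.inverse (i.factorial : R)) * X ^ i

section TruncExpPoly

variable {R S : Type*} [CommRing R] [Ring S] [Algebra R S] {m : ℕ}

theorem coeff_truncExpPoly {d : ℕ} (hd : d < m) :
    (truncExpPoly R m).coeff d = Ring.inverse (d.factorial : R) := by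
  simp [truncExpPoly, coeff_X_pow, hd]

theorem X_pow_dvd_truncExpPoly_comp_neg_X_mul_sub_one (hfac : IsUnit ((m - 1).factorial : R)) :
    X ^ m ∣ (truncExpPoly R m).comp (-X) * truncExpPoly R m - 1 := by
  rw [X_pow_dvd_iff]
  intro d hd
  have hcoeff_neg (i : ℕ) :
      ((truncExpPoly R m).comp (-X)).coeff i = (truncExpPoly R m).coeff i * (-1) ^ i := by
    rw [← comp_C_mul_X_coeff, C_neg, C_1, neg_one_mul]
  -- The coefficient of `X ^ d` in the product is the binomial expansion of `(-1 + 1) ^ d / d!`.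
  have hproduct : ((truncExpPoly R m).comp (-X) * truncExpPoly R m).coeff d =
      Ring.inverse (d.factorial : R) * (-1 + 1) ^ d := by
    rw [inverse_factorial_mul_add_pow (hfac.natCast_factorial_of_lt hd), coeff_mul]
    refine Finset.sum_congr rfl fun k hk ↦ ?_
    have hfst : k.1 < m := (Finset.HasAntidiagonal.antidiagonal.fst_le hk).trans_lt hd
    have hsnd : k.2 < m := (Finset.HasAntidiagonal.antidiagonal.snd_le hk).trans_lt hd
    rw [hcoeff_neg, coeff_truncExpPoly hfst, coeff_truncExpPoly hsnd, one_pow, mul_one]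
  rw [coeff_sub, hproduct, coeff_one, neg_add_cancel]
  rcases eq_or_ne d 0 with rfl | hd0
  · simp
  · simp [hd0]

theorem aeval_neg_truncExpPoly_mul (hfac : IsUnit ((m - 1).factorial : R)) {a : S}
    (ha : a ^ m = 0) : aeval (-a) (truncExpPoly R m) * aeval a (truncExpPoly R m) = 1 := by
  simpa only [map_sub, map_mul, map_one, map_neg, aeval_comp, aeval_X, sub_eq_zero] using
    aeval_eq_zero_of_X_pow_dvd (X_pow_dvd_truncExpPoly_comp_neg_X_mul_sub_one hfac) ha

theorem semiconjBy_aeval_truncExpPoly_iff {a b c : S} (hb : b ^ m = 0) (hc : c ^ m = 0) :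
    SemiconjBy a (aeval b (truncExpPoly R m)) (aeval c (truncExpPoly R m)) ↔
      SemiconjBy a b c := by
  rcases le_or_gt m 1 with hm | hm
  · obtain rfl : b = 0 := by simpa only [pow_one] using pow_eq_zero_of_le hm hb
    obtain rfl : c = 0 := by simpa only [pow_one] using pow_eq_zero_of_le hm hc
    exact iff_of_true (semiconjBy_aeval (SemiconjBy.zero_right a) _) (SemiconjBy.zero_right a)
  · have hcoeff : IsUnit ((truncExpPoly R m).coeff 1) := by simp [coeff_truncExpPoly hm]
    exact semiconjBy_aeval_iff_of_isUnit_coeff_one hcoeff ⟨m, hb⟩ ⟨m, hc⟩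

end TruncExpPoly

section TruncExp

variable {R : Type*} [CommRing R] {m : ℕ}

theorem truncExp_eq_aeval (A : Matrix (Fin m) (Fin m) R) :
    truncExp A = aeval A (truncExpPoly R m) := by
  simp [truncExp, truncExpPoly, Algebra.smul_def]

theorem transpose_truncExp (A : Matrix (Fin m) (Fin m) R) :
    (truncExp A).transpose = truncExp A.transpose := by
  simp [truncExp, Matrix.transpose_sum, Matrix.transpose_pow]

theorem truncExp_neg_mul (hfac : IsUnit ((m - 1).factorial : R))
    {A : Matrix (Fin m) (Fin m) R} (hA : A ^ m = 0) : truncExp (-A) * truncExp A = 1 := by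
  simpa only [truncExp_eq_aeval] using aeval_neg_truncExpPoly_mul hfac hA

theorem semiconjBy_truncExp_iff {J C D : Matrix (Fin m) (Fin m) R} (hC : C ^ m = 0)
    (hD : D ^ m = 0) : SemiconjBy J (truncExp C) (truncExp D) ↔ SemiconjBy J C D := by
  simpa only [truncExp_eq_aeval] using semiconjBy_aeval_truncExpPoly_iff hC hD

end TruncExp

theorem truncExp_pairing_general {R : Type*} [CommRing R] {m : ℕ}
    (hfac : IsUnit ((m - 1).factorial : R)) (J : Matrix (Fin m) (Fin m) R)
    {A : Matrix (Fin m) (Fin m) R} (hA : A ^ m = 0) :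
    A.transpose * J + J * A = 0 ↔ (truncExp A).transpose * J * truncExp A = J := by
  have hneg : (-A) ^ m = 0 := by rw [neg_pow, hA, mul_zero]
  have htranspose : A.transpose ^ m = 0 := by
    rw [← Matrix.transpose_pow, hA, Matrix.transpose_zero]
  let B : (Matrix (Fin m) (Fin m) R)ˣ :=
    ⟨truncExp A, truncExp (-A), mul_eq_one_comm.mp (truncExp_neg_mul hfac hA),
      truncExp_neg_mul hfac hA⟩
  calc A.transpose * J + J * A = 0
      ↔ SemiconjBy J (-A) A.transpose := by
        rw [SemiconjBy, mul_neg, neg_eq_iff_add_eq_zero, add_comm]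
    _ ↔ SemiconjBy J (truncExp (-A)) (truncExp A.transpose) :=
        (semiconjBy_truncExp_iff hneg htranspose).symm
    _ ↔ (truncExp A).transpose * J * truncExp A = J := by
        rw [transpose_truncExp]
        exact eq_comm.trans (Units.eq_mul_inv_iff_mul_eq B)

/-- Let `m ≥ 1`, let `R` be a commutative ring in which `(m−1)!` is invertible, let
`J ∈ Mat_m(R)` be an invertible matrix, and let `A ∈ Mat_m(R)` have characteristic
polynomial `X^m`.  Set `B = exp(A)`, the truncated exponential.  Then
`Aᵀ J + J A = 0` if and only if `Bᵀ J B = J`. -/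
theorem truncExp_pairing {R : Type*} [CommRing R] {m : ℕ} (hm : 1 ≤ m)
    (hfac : IsUnit (((m - 1).factorial : R)))
    (J : Matrix (Fin m) (Fin m) R) (hJ : IsUnit J)
    (A : Matrix (Fin m) (Fin m) R) (hA : A.charpoly = X ^ m) :
    A.transpose * J + J * A = 0 ↔
      (truncExp A).transpose * J * (truncExp A) = J := by
  refine truncExp_pairing_general hfac J ?_
  simpa only [hA, map_pow, aeval_X] using A.aeval_self_charpoly
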